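/- arXiv:1109.2924 — 2 statements merged into one kernel-verified Lean document; each statement's English description precedes it below -/
import Mathlib

section
/- Let k be an algebraically closed field, D a k-linear triangulated category with finite-dimensional Hom spaces, and H a finite heart of a bounded t-structure on D with simple objects S_1, …, S_n. Suppose P_1, …, P_n are projectives of H with dim_k Hom(P_i, S_j) = δ_{ij}. Let A = End(P_1 ⊕ … ⊕ P_n), let J be the Jacobson radical of A, and let e_i ∈ A be the idempotent given by projection onto the summand P_i. Then for all i, j there is a k-linear isomorphism e_j (J/J²) e_i ≅ Ext^1(S_j, S_i)^*; that is, the space Irr(P_i, P_j) of irreducible maps P_i → P_j in the additive subcategory generated by P_1, …, P_n is dual to Ext^1(S_j, S_i). -/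
open CategoryTheory Category Limits Pretriangulated ZeroObject

universe v u

namespace Paper

variable (C : Type u) [Category.{v} C] [HasZeroObject C] [HasShift C ℤ]
  [Preadditive C] [∀ n : ℤ, (shiftFunctor C n).Additive] [Pretriangulated C]

/-- The right perpendicular of a set of objects: objects receiving no nonzero
morphism from the set. -/
def perp (P : Set C) : Set C := {G | ∀ F ∈ P, ∀ f : F ⟶ G, f = 0}

/-- A bounded t-structure on a (pre)triangulated category, given by its aisle `P`. -/
structure TStr where
  P : Set C
  /-- `P` is closed under direct summands (hence under isomorphism). -/
  summand : ∀ (X Y : C) (i : Y ⟶ X) (r : X ⟶ Y), i ≫ r = 𝟙 Y → X ∈ P → Y ∈ P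
  /-- `P[1] ⊆ P`. -/
  shift_mem : ∀ X ∈ P, X⟦(1 : ℤ)⟧ ∈ P
  /-- Every object fits in a triangle `F → E → G → F[1]` with `F ∈ P` and `G ∈ P^⊥`. -/
  exists_triangle : ∀ E : C, ∃ (F G : C) (f : F ⟶ E) (g : E ⟶ G) (h : G ⟶ F⟦(1 : ℤ)⟧),
    F ∈ P ∧ G ∈ perp C P ∧ Triangle.mk f g h ∈ distTriang C
  /-- `M[k] ∈ P` for `k ≫ 0`. -/
  bounded_above : ∀ M : C, ∃ a : ℤ, ∀ j : ℤ, a ≤ j → M⟦j⟧ ∈ P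
  /-- `M[k] ∈ P^⊥` for `k ≪ 0`. -/
  bounded_below : ∀ M : C, ∃ b : ℤ, ∀ j : ℤ, j ≤ b → M⟦j⟧ ∈ perp C P

/-- The heart `H = P^⊥[1] ∩ P` of a bounded t-structure. -/
def heart (T : TStr C) : Set C := {X | X ∈ T.P ∧ X⟦(-1 : ℤ)⟧ ∈ perp C T.P}

/-- The shift `S[m]` of a set of objects. -/
def shiftSet (S : Set C) (m : ℤ) : Set C := {X | X⟦(-m : ℤ)⟧ ∈ S}

/-- An object `P` is a projective of a heart if `Hom(P, M[k]) = 0` for all `k ≠ 0`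
and all `M` in the heart. -/
def IsProjOf (T : TStr C) (P : C) : Prop :=
  ∀ (k : ℤ), k ≠ 0 → ∀ M ∈ heart C T, ∀ f : P ⟶ M⟦k⟧, f = 0

/-- A filtration of an object `M` by triangles with factors in the heart, shifted by a
strictly decreasing sequence of degrees: the canonical filtration associated to a bounded
t-structure. -/
structure HeartFiltration (T : TStr C) (M : C) where
  n : ℕ
  obj : ℕ → C
  deg : ℕ → ℤ
  factor : ℕ → C
  zero : IsZero (obj 0)
  top : obj n ≅ M
  mem : ∀ i, 1 ≤ i → i ≤ n → factor i ∈ heart C T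
  strict : ∀ i j, 1 ≤ i → i < j → j ≤ n → deg j < deg i
  tri : ∀ i, 1 ≤ i → i ≤ n →
    ∃ (f : obj (i - 1) ⟶ obj i) (g : obj i ⟶ (factor i)⟦deg i⟧)
      (h : (factor i)⟦deg i⟧ ⟶ (obj (i - 1))⟦(1 : ℤ)⟧),
      Triangle.mk f g h ∈ distTriang C

variable {C}

open Classical in
/-- The homology `H^k(M)` of `M` with respect to the heart, read off from a
filtration: the factor in degree `k` if there is one, and `0` otherwise. -/
noncomputable def HeartFiltration.homologyAt {T : TStr C} {M : C}
    (F : HeartFiltration C T M) (k : ℤ) : C :=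
  if h : ∃ i, 1 ≤ i ∧ i ≤ F.n ∧ F.deg i = k then F.factor h.choose else 0

variable (C)

/-- A torsion pair `⟨F, T⟩` in the heart of a bounded t-structure: `Hom(T, F) = 0` and
every object of the heart is an extension (triangle) of an `F`-object by a `T`-object. -/
structure TorsionPairIn (T : TStr C) where
  free : Set C
  tor : Set C
  free_sub : free ⊆ heart C T
  tor_sub : tor ⊆ heart C T
  hom_zero : ∀ X ∈ tor, ∀ Y ∈ free, ∀ f : X ⟶ Y, f = 0
  exists_ses : ∀ E ∈ heart C T, ∃ (A B : C) (f : A ⟶ E) (g : E ⟶ B) (h : B ⟶ A⟦(1 : ℤ)⟧),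
    A ∈ tor ∧ B ∈ free ∧ Triangle.mk f g h ∈ distTriang C

/-- The forward tilt `H^♯` of the heart at a torsion pair `⟨free, tor⟩`:
objects `E` with `H^1(E) ∈ F`, `H^0(E) ∈ T` and `H^i(E) = 0` otherwise. -/
def tiltSharpSet (T : TStr C) (free tor : Set C) : Set C :=
  {E | ∀ (F : HeartFiltration C T E) (i : ℕ), 1 ≤ i → i ≤ F.n →
    IsZero (F.factor i) ∨ (F.deg i = 1 ∧ F.factor i ∈ free) ∨
      (F.deg i = 0 ∧ F.factor i ∈ tor)}

/-- The backward tilt `H^♭` of the heart at a torsion pair `⟨free, tor⟩`: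
objects `E` with `H^0(E) ∈ F`, `H^{-1}(E) ∈ T` and `H^i(E) = 0` otherwise. -/
def tiltFlatSet (T : TStr C) (free tor : Set C) : Set C :=
  {E | ∀ (F : HeartFiltration C T E) (i : ℕ), 1 ≤ i → i ≤ F.n →
    IsZero (F.factor i) ∨ (F.deg i = 0 ∧ F.factor i ∈ free) ∨
      (F.deg i = -1 ∧ F.factor i ∈ tor)}

/-- Simple objects of a heart (or of any full subcategory closed under the abelian
structure): nonzero objects which are not the middle term of a nontrivial short exact
sequence (triangle) in the heart. -/
def IsSimpleIn (H : Set C) (X : C) : Prop :=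
  X ∈ H ∧ ¬ IsZero X ∧ ∀ (A B : C) (f : A ⟶ X) (g : X ⟶ B) (h : B ⟶ A⟦(1 : ℤ)⟧),
    A ∈ H → B ∈ H → Triangle.mk f g h ∈ (distTriang C) → IsZero A ∨ IsZero B

/-- A heart is finite if it has finitely many simples up to isomorphism and every object
is a finite iterated extension of simple objects. -/
def FiniteHeart (T : TStr C) : Prop :=
  (∃ (n : ℕ) (S : Fin n → C), (∀ i, IsSimpleIn C (heart C T) (S i)) ∧
    ∀ X, IsSimpleIn C (heart C T) X → ∃ i, Nonempty (X ≅ S i)) ∧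
  ∀ M ∈ heart C T, ∃ (m : ℕ) (obj : ℕ → C), IsZero (obj 0) ∧ Nonempty (obj m ≅ M) ∧
    ∀ i < m, ∃ (s : C) (f : obj i ⟶ obj (i + 1)) (g : obj (i + 1) ⟶ s)
      (h : s ⟶ (obj i)⟦(1 : ℤ)⟧),
      IsSimpleIn C (heart C T) s ∧ Triangle.mk f g h ∈ distTriang C

section Biproducts

variable [HasFiniteBiproducts C]

/-- Finite direct sums of copies of an object `S`. -/
def addObj (S : C) : Set C := {M | ∃ n : ℕ, Nonempty (M ≅ ⨁ (fun _ : Fin n => S))}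

/-- The simple forward tilt `H^♯_S` of the heart at a rigid simple `S`: the forward tilt
at the torsion pair whose free part consists of finite direct sums of copies of `S`. -/
def simpleSharpSet (T : TStr C) (S : C) : Set C :=
  tiltSharpSet C T (addObj C S) {M | M ∈ heart C T ∧ ∀ f : M ⟶ S, f = 0}

/-- The simple backward tilt `H^♭_S` of the heart at a rigid simple `S`: the backward
tilt at the torsion pair whose torsion part consists of finite direct sums of copies
of `S`. -/
def simpleFlatSet (T : TStr C) (S : C) : Set C :=
  tiltFlatSet C T {M | M ∈ heart C T ∧ ∀ f : S ⟶ M, f = 0} (addObj C S)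

end Biproducts

/-- The radical morphisms from `X` to `Y`: `f` with `𝟙 X - f ≫ g` invertible for every
`g : Y ⟶ X`.  Under the identification `Hom(P_i, P_j) = e_j A e_i` for
`A = End(P_1 ⊕ … ⊕ P_n)`, with `e_i` the idempotent projecting onto `P_i`, this is
`e_j J e_i` where `J` is the Jacobson radical of `A`. -/
def radSet (X Y : C) : Set (X ⟶ Y) := {f | ∀ g : Y ⟶ X, IsIso (𝟙 X - f ≫ g)}

section Linear

variable (k : Type*) [Field k] [Linear k C]

/-- `e_j J e_i` as a `k`-subspace of `Hom(P_i, P_j)` (the span of the radical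
morphisms, which is the set of radical morphisms itself). -/
def radMod (X Y : C) : Submodule k (X ⟶ Y) := Submodule.span k (radSet C X Y)

/-- Composites of two radical morphisms through some `P l`; the span of these is
`e_j J² e_i`. -/
def radSqSet (n : ℕ) (P : Fin n → C) (i j : Fin n) : Set (P i ⟶ P j) :=
  {f | ∃ (l : Fin n) (u : P i ⟶ P l) (v : P l ⟶ P j),
    u ∈ radSet C (P i) (P l) ∧ v ∈ radSet C (P l) (P j) ∧ f = u ≫ v}

/-- `e_j J² e_i` as a `k`-subspace of `Hom(P_i, P_j)`. -/
def radSqMod (n : ℕ) (P : Fin n → C) (i j : Fin n) : Submodule k (P i ⟶ P j) :=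
  Submodule.span k (radSqSet C n P i j)

/-- The space `Irr(P_i, P_j) = e_j (J/J²) e_i` of irreducible maps `P_i → P_j` in the
additive subcategory generated by `P_1, …, P_n`: the quotient
`(e_j J e_i) / (e_j J² e_i)`, which is canonically identified with `e_j (J/J²) e_i`. -/
abbrev IrrSpace (n : ℕ) (P : Fin n → C) (i j : Fin n) :=
  ↥(radMod C k (P i) (P j)) ⧸
    Submodule.comap (radMod C k (P i) (P j)).subtype (radSqMod C k n P i j)

end Linear


section DistinguishedTriangles

variable {C}
variable {X Y Z : C} {f : X ⟶ Y} {g : Y ⟶ Z} {h : Z ⟶ X⟦(1 : ℤ)⟧}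

lemma distTriang_comp₁₂ (hT : Triangle.mk f g h ∈ distTriang C) : f ≫ g = 0 :=
  comp_distTriang_mor_zero₁₂ _ hT

lemma distTriang_comp₂₃ (hT : Triangle.mk f g h ∈ distTriang C) : g ≫ h = 0 :=
  comp_distTriang_mor_zero₂₃ _ hT

lemma exists_lift₂ (hT : Triangle.mk f g h ∈ distTriang C) {W : C} (x : W ⟶ Y)
    (hx : x ≫ g = 0) : ∃ x' : W ⟶ X, x = x' ≫ f :=
  Triangle.coyoneda_exact₂ _ hT x hx

lemma exists_lift₃ (hT : Triangle.mk f g h ∈ distTriang C) {W : C} (x : W ⟶ Z)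
    (hx : x ≫ h = 0) : ∃ x' : W ⟶ Y, x = x' ≫ g :=
  Triangle.coyoneda_exact₃ _ hT x hx

lemma exists_desc₃ (hT : Triangle.mk f g h ∈ distTriang C) {W : C} (x : Z ⟶ W)
    (hx : g ≫ x = 0) : ∃ x' : X⟦(1 : ℤ)⟧ ⟶ W, x = h ≫ x' :=
  Triangle.yoneda_exact₃ _ hT x hx

lemma eq_zero_of_comp₂_eq_zero (hT : Triangle.mk f g h ∈ distTriang C) {W : C} (x : Z ⟶ W)
    (hx : g ≫ x = 0) (hW : ∀ y : X⟦(1 : ℤ)⟧ ⟶ W, y = 0) : x = 0 := by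
  obtain ⟨y, rfl⟩ := exists_desc₃ hT x hx
  rw [hW y, comp_zero]

end DistinguishedTriangles

section TStructureLemmas

open Triangulated

variable {C}
variable (t : TStructure C)

lemma isLE_obj₃ {X Y Z : C} {f : X ⟶ Y} {g : Y ⟶ Z} {h : Z ⟶ X⟦(1 : ℤ)⟧}
    (hT : Triangle.mk f g h ∈ distTriang C) (n : ℤ) (hX : t.IsLE X (n + 1)) (hY : t.IsLE Y n) :
    t.IsLE Z n :=
  t.isLE₂ _ (rot_of_distTriang _ hT) n hY (t.isLE_shift X (n + 1) 1 n)

lemma isGE_obj₁ {X Y Z : C} {f : X ⟶ Y} {g : Y ⟶ Z} {h : Z ⟶ X⟦(1 : ℤ)⟧}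
    (hT : Triangle.mk f g h ∈ distTriang C) (n : ℤ) (hY : t.IsGE Y n) (hZ : t.IsGE Z (n - 1)) :
    t.IsGE X n :=
  t.isGE₂ _ (inv_rot_of_distTriang _ hT) n (t.isGE_shift Z (n - 1) (-1) n) hY

lemma isLE_of_retract {X Y : C} (i : Y ⟶ X) (r : X ⟶ Y) (hir : i ≫ r = 𝟙 Y) (n : ℤ)
    (hX : t.IsLE X n) : t.IsLE Y n := by
  rw [t.isLE_iff_orthogonal n (n + 1) rfl]
  intro G f _
  rw [← id_comp f, ← hir, assoc, t.zero (r ≫ f) n (n + 1), comp_zero]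

/-- Morphisms out of `Z` vanish on bounded objects as soon as they vanish on the objects
concentrated in a single degree. -/
lemma hom_eq_zero_of_pure (Z : C) (a : ℤ) (N : ℕ) :
    ∀ b : ℤ, b = a + N →
      (∀ m : ℤ, a ≤ m → m < b → ∀ Y : C, t.IsLE Y m → t.IsGE Y m → ∀ f : Z ⟶ Y, f = 0) →
      ∀ Y : C, t.IsGE Y a → t.IsLE Y (b - 1) → ∀ f : Z ⟶ Y, f = 0 := by
  induction N with
  | zero =>
    intro b hb _ Y _ _ f
    exact (t.isZero Y (b - 1) a (by lia)).eq_of_tgt _ _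
  | succ N ih =>
    intro b hb hpure Y hYa hYb f
    obtain ⟨X, G, hX, hG, x, g, h, hT⟩ := t.exists_triangle Y (b - 2) (b - 1) (by lia)
    have hX' : t.IsLE X (b - 1 - 1) := ⟨by convert hX using 1; ring⟩
    have hG' : t.IsGE G (b - 1) := ⟨hG⟩
    have hfg : f ≫ g = 0 := by
      refine hpure (b - 1) (by lia) (by lia) G ?_ hG' _
      exact isLE_obj₃ t hT _ (t.isLE_of_le X (b - 1 - 1) _) hYb
    obtain ⟨f', rfl⟩ := exists_lift₂ hT f hfg
    have : f' = 0 := by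
      refine ih (b - 1) (by push_cast at hb; lia) (fun m h₁ h₂ ↦ hpure m h₁ (by lia)) X ?_ hX' f'
      exact isGE_obj₁ t hT _ hYa (t.isGE_of_ge G (a - 1) (b - 1) (by push_cast at hb; lia))
    rw [this, zero_comp]

/-- An object in degrees `≤ 0` with no nonzero morphism to the heart is in degrees `≤ -1`. -/
lemma isLE_neg_one_of_hom_heart_eq_zero (Z : C) (hZ : t.IsLE Z 0)
    (h : ∀ M : C, t.IsLE M 0 → t.IsGE M 0 → ∀ f : Z ⟶ M, f = 0) : t.IsLE Z (-1) := by
  obtain ⟨X, G, hX, hG, x, g, d, hT⟩ := t.exists_triangle Z (-1) 0 (by lia)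
  have hX' : t.IsLE X (-1) := ⟨hX⟩
  have hg : g = 0 := h G (isLE_obj₃ t hT 0 (t.isLE_of_le X (-1) _) hZ) ⟨hG⟩ g
  obtain ⟨s, hs⟩ := exists_lift₂ hT (𝟙 Z) (by rw [hg, comp_zero])
  exact isLE_of_retract t s x hs.symm _ hX'

/-- The fibre of a nonzero morphism from an object in degrees `≤ 0` to a simple object of the
heart is in degrees `≤ 0`. -/
lemma isLE_fibre_of_ne_zero {K X S : C} {f : K ⟶ X} {g : X ⟶ S} {h : S ⟶ K⟦(1 : ℤ)⟧}
    (hT : Triangle.mk f g h ∈ distTriang C) (hX : t.IsLE X 0) (hS : t.IsLE S 0)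
    (hS' : t.IsGE S 0)
    (hsimple : ∀ (A B : C) (a : A ⟶ S) (b : S ⟶ B) (c : B ⟶ A⟦(1 : ℤ)⟧),
      t.IsLE A 0 → t.IsGE A 0 → t.IsLE B 0 → t.IsGE B 0 →
      Triangle.mk a b c ∈ distTriang C → IsZero A ∨ IsZero B)
    (hg : g ≠ 0) : t.IsLE K 0 := by
  have hZ : t.IsLE (K⟦(1 : ℤ)⟧) 0 :=
    isLE_obj₃ t (rot_of_distTriang _ hT) 0 (t.isLE_of_le X 0 _) hS
  obtain ⟨F, M, hF, hM, x, m, d, hT'⟩ := t.exists_triangle (K⟦(1 : ℤ)⟧) (-1) 0 (by lia)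
  have hF' : t.IsLE F (-1) := ⟨hF⟩
  have hM₀ : t.IsGE M 0 := ⟨hM⟩
  have hM₁ : t.IsLE M 0 := isLE_obj₃ t hT' 0 (t.isLE_of_le F (-1) _) hZ
  obtain ⟨L, l, e, hL⟩ := distinguished_cocone_triangle₁ (h ≫ m)
  have hLge : t.IsGE L 0 := isGE_obj₁ t hL 0 hS' (t.isGE_of_ge M _ 0)
  have hLle : t.IsLE L 0 := by
    rw [← t.isLE_shift_iff L 0 1 (-1), t.isLE_iff_orthogonal (-1) 0 rfl]
    intro G y hG
    have hhm : h ≫ m ≫ e ≫ y = 0 := by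
      simpa using distTriang_comp₂₃ hL =≫ y
    have hm : m ≫ e ≫ y = 0 :=
      eq_zero_of_comp₂_eq_zero (rot_of_distTriang _ hT) _ hhm fun z ↦
        t.zero_of_isLE_of_isGE z (-1) 0 (by lia) (t.isLE_shift X 0 1 (-1)) hG
    have he : e ≫ y = 0 :=
      eq_zero_of_comp₂_eq_zero hT' _ hm fun z ↦
        t.zero_of_isLE_of_isGE z (-2) 0 (by lia) (t.isLE_shift F (-1) 1 (-2)) hG
    exact eq_zero_of_comp₂_eq_zero (rot_of_distTriang _ hL) _ he fun z ↦
      t.zero_of_isLE_of_isGE z (-1) 0 (by lia) (t.isLE_shift S 0 1 (-1)) hG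
  rcases hsimple L M l (h ≫ m) e hLle hLge hM₁ hM₀ hL with hL0 | hM0
  · exfalso
    have hiso : IsIso (h ≫ m) := (Triangle.isZero₁_iff_isIso₂ _ hL).1 hL0
    apply hg
    rw [← cancel_mono (h ≫ m), zero_comp, ← assoc, distTriang_comp₂₃ hT, zero_comp]
  · have hx : IsIso x := (Triangle.isZero₃_iff_isIso₁ _ hT').1 hM0
    have : t.IsLE (K⟦(1 : ℤ)⟧) (-1) := t.isLE_of_iso (asIso x) (-1)
    exact t.isLE_of_shift K 0 1 (-1)

end TStructureLemmas

section TStrToTStructure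

open Triangulated

variable {C}

lemma TStr.mem_of_iso (T : TStr C) {X Y : C} (e : X ≅ Y) (hX : X ∈ T.P) : Y ∈ T.P :=
  T.summand X Y e.inv e.hom (by simp) hX

lemma perp_of_iso (T : TStr C) {X Y : C} (e : X ≅ Y) (hX : X ∈ perp C T.P) : Y ∈ perp C T.P := by
  intro F hF f
  rw [← cancel_mono e.inv, zero_comp]
  exact hX F hF _

lemma perp_shift_neg_one (T : TStr C) {X : C} (hX : X ∈ perp C T.P) :
    X⟦(-1 : ℤ)⟧ ∈ perp C T.P := by
  intro F hF f
  apply (shiftFunctor C (1 : ℤ)).map_injective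
  let e : (X⟦(-1 : ℤ)⟧)⟦(1 : ℤ)⟧ ≅ X := (shiftFunctorCompIsoId C (-1 : ℤ) 1 (by lia)).app X
  rw [Functor.map_zero, ← cancel_mono e.hom, zero_comp]
  exact hX _ (T.shift_mem F hF) _

/-- The t-structure, in the sense of Mathlib, with aisle `T.P`. -/
def TStr.toTStructure (T : TStr C) : TStructure C where
  le n X := X⟦n⟧ ∈ T.P
  ge n X := X⟦n - 1⟧ ∈ perp C T.P
  le_isClosedUnderIsomorphisms n := ⟨fun e h ↦ T.mem_of_iso ((shiftFunctor C n).mapIso e) h⟩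
  ge_isClosedUnderIsomorphisms n :=
    ⟨fun e h ↦ perp_of_iso T ((shiftFunctor C (n - 1)).mapIso e) h⟩
  le_shift n a n' h X hX := T.mem_of_iso ((shiftFunctorAdd' C a n' n h).app X) hX
  ge_shift n a n' h X hX :=
    perp_of_iso T ((shiftFunctorAdd' C a (n' - 1) (n - 1) (by lia)).app X) hX
  zero' X Y f hX hY := by
    have hX' := T.mem_of_iso ((shiftFunctorZero C ℤ).app X) hX
    have hY' := perp_of_iso T ((shiftFunctorZero' C (1 - 1 : ℤ) (by lia)).app Y) hY
    exact hY' X hX' f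
  le_zero_le X hX := T.shift_mem X (T.mem_of_iso ((shiftFunctorZero C ℤ).app X) hX)
  ge_one_le X hX :=
    perp_shift_neg_one T (perp_of_iso T ((shiftFunctorZero' C (1 - 1 : ℤ) (by lia)).app X) hX)
  exists_triangle_zero_one A := by
    obtain ⟨F, G, f, g, h, hF, hG, hT⟩ := T.exists_triangle A
    exact ⟨F, G, T.mem_of_iso ((shiftFunctorZero C ℤ).symm.app F) hF,
      perp_of_iso T ((shiftFunctorZero' C (1 - 1 : ℤ) (by lia)).symm.app G) hG, f, g, h, hT⟩

lemma mem_heart_iff (T : TStr C) (X : C) :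
    X ∈ heart C T ↔ T.toTStructure.IsLE X 0 ∧ T.toTStructure.IsGE X 0 := by
  constructor
  · rintro ⟨h₁, h₂⟩
    exact ⟨⟨T.mem_of_iso ((shiftFunctorZero C ℤ).symm.app X) h₁⟩, ⟨h₂⟩⟩
  · rintro ⟨⟨h₁⟩, ⟨h₂⟩⟩
    exact ⟨T.mem_of_iso ((shiftFunctorZero C ℤ).app X) h₁, h₂⟩

lemma TStr.exists_isLE (T : TStr C) (X : C) (a : ℤ) : ∃ b : ℤ, a ≤ b ∧ T.toTStructure.IsLE X b := by
  obtain ⟨b, hb⟩ := T.bounded_above X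
  exact ⟨max a b, le_max_left _ _, ⟨hb _ (le_max_right _ _)⟩⟩

lemma TStr.exists_isGE (T : TStr C) (X : C) (b : ℤ) : ∃ a : ℤ, a ≤ b ∧ T.toTStructure.IsGE X a := by
  obtain ⟨a, ha⟩ := T.bounded_below X
  exact ⟨min a b, min_le_right _ _, ⟨ha _ (by have := min_le_left a b; lia)⟩⟩

/-- A projective of the heart has no nonzero morphism to an object concentrated in a single
nonzero degree. -/
lemma IsProjOf.hom_pure_eq_zero {T : TStr C} {P : C} (hP : IsProjOf C T P) (m : ℤ) (hm : m ≠ 0)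
    (Y : C) (h₁ : T.toTStructure.IsLE Y m) (h₂ : T.toTStructure.IsGE Y m) (f : P ⟶ Y) : f = 0 := by
  have hY : Y⟦m⟧ ∈ heart C T := (mem_heart_iff T _).2
    ⟨T.toTStructure.isLE_shift Y m m 0, T.toTStructure.isGE_shift Y m m 0⟩
  rw [← cancel_mono ((shiftEquiv C m).unitIso.app Y).hom, zero_comp]
  exact hP (-m) (by lia) _ hY _

lemma IsProjOf.isLE {T : TStr C} {P : C} (hP : IsProjOf C T P) : T.toTStructure.IsLE P 0 := by
  rw [T.toTStructure.isLE_iff_orthogonal 0 1 rfl]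
  intro Y f hY
  obtain ⟨b, hb, hYb⟩ := T.exists_isLE Y 1
  obtain ⟨N, hN⟩ := Int.eq_ofNat_of_zero_le (show 0 ≤ b + 1 - 1 by lia)
  exact hom_eq_zero_of_pure T.toTStructure P 1 N (b + 1) (by lia)
    (fun m h₁ _ Z hZ hZ' g ↦ hP.hom_pure_eq_zero m (by lia) Z hZ hZ' g) Y hY
    (by simpa using hYb) f

lemma IsProjOf.hom_eq_zero {T : TStr C} {P : C} (hP : IsProjOf C T P) (Y : C)
    (hY : T.toTStructure.IsLE Y (-1)) (f : P ⟶ Y) : f = 0 := by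
  obtain ⟨a, ha, hYa⟩ := T.exists_isGE Y 0
  obtain ⟨N, hN⟩ := Int.eq_ofNat_of_zero_le (show 0 ≤ -a by lia)
  exact hom_eq_zero_of_pure T.toTStructure P a N 0 (by lia)
    (fun m _ h₁ Z hZ hZ' g ↦ hP.hom_pure_eq_zero m (by lia) Z hZ hZ' g) Y hYa
    (by simpa using hY) f

/-- In a finite heart, an object in degrees `≤ 0` with no nonzero morphism to a simple object is
in degrees `≤ -1`. -/
lemma isLE_neg_one_of_hom_simple_eq_zero {T : TStr C} (hfin : FiniteHeart C T) (Z : C)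
    (hZ : T.toTStructure.IsLE Z 0)
    (h : ∀ S : C, IsSimpleIn C (heart C T) S → ∀ f : Z ⟶ S, f = 0) :
    T.toTStructure.IsLE Z (-1) := by
  refine isLE_neg_one_of_hom_heart_eq_zero _ Z hZ fun M hM hM' f ↦ ?_
  obtain ⟨m, obj, h0, ⟨e⟩, htri⟩ := hfin.2 M ((mem_heart_iff T M).2 ⟨hM, hM'⟩)
  have key : ∀ i ≤ m, ∀ g : Z ⟶ obj i, g = 0 := by
    intro i
    induction i with
    | zero => exact fun _ g ↦ h0.eq_of_tgt _ _
    | succ i ih =>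
      intro hi g
      obtain ⟨s, a, b, c, hs, hT⟩ := htri i (by lia)
      obtain ⟨g', rfl⟩ := exists_lift₂ hT g (h s hs _)
      rw [ih (by lia) g', zero_comp]
  rw [← cancel_mono e.inv, zero_comp]
  exact key m le_rfl _

lemma IsSimpleIn.isLE_fibre {T : TStr C} {K X S : C} (hS : IsSimpleIn C (heart C T) S)
    {f : K ⟶ X} {g : X ⟶ S} {h : S ⟶ K⟦(1 : ℤ)⟧} (hT : Triangle.mk f g h ∈ distTriang C)
    (hX : T.toTStructure.IsLE X 0) (hg : g ≠ 0) : T.toTStructure.IsLE K 0 := by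
  obtain ⟨h₁, h₂⟩ := (mem_heart_iff T S).1 hS.1
  refine isLE_fibre_of_ne_zero _ hT hX h₁ h₂ (fun A B a b c hA hA' hB hB' ↦ ?_) hg
  exact hS.2.2 A B a b c ((mem_heart_iff T A).2 ⟨hA, hA'⟩) ((mem_heart_iff T B).2 ⟨hB, hB'⟩)

end TStrToTStructure

section Covers

variable {C} {k : Type*} [Field k] [Linear k C]

variable (k) in
/-- Projectives `P i` of a finite heart together with morphisms `p i : P i ⟶ S i` to its simple
objects, such that `Hom(P i, S i)` is spanned by `p i` and `Hom(P i, S j) = 0` for `i ≠ j`. -/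
structure SimpleCovers (T : TStr C) {n : ℕ} (S P : Fin n → C) where
  finite : FiniteHeart C T
  simple : ∀ i, IsSimpleIn C (heart C T) (S i)
  exists_iso : ∀ Z, IsSimpleIn C (heart C T) Z → ∃ i, Nonempty (Z ≅ S i)
  proj : ∀ i, IsProjOf C T (P i)
  /-- the covering morphisms -/
  p : ∀ i, P i ⟶ S i
  /-- the coordinate with respect to `p i` -/
  coord : ∀ i, (P i ⟶ S i) ≃ₗ[k] k
  coord_p : ∀ i, coord i (p i) = 1
  hom_eq_zero : ∀ i j, i ≠ j → ∀ f : P i ⟶ S j, f = 0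

namespace SimpleCovers

variable {T : TStr C} {n : ℕ} {S P : Fin n → C} (c : SimpleCovers k T S P)

lemma p_ne_zero (i : Fin n) : c.p i ≠ 0 := by
  intro h
  simpa [h] using c.coord_p i

lemma eq_coord_smul {i : Fin n} (f : P i ⟶ S i) : f = c.coord i f • c.p i :=
  (c.coord i).injective (by simp [c.coord_p])

lemma isLE_simple (c : SimpleCovers k T S P) (i : Fin n) : T.toTStructure.IsLE (S i) 0 :=
  ((mem_heart_iff T _).1 (c.simple i).1).1

lemma isGE_simple (c : SimpleCovers k T S P) (i : Fin n) : T.toTStructure.IsGE (S i) 0 :=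
  ((mem_heart_iff T _).1 (c.simple i).1).2

/-- A morphism killed by `p l` is killed by all morphisms from `P l` to a simple object. -/
lemma comp_eq_zero {W : C} {l j : Fin n} (u : W ⟶ P l) (hu : u ≫ c.p l = 0) (v : P l ⟶ S j) :
    u ≫ v = 0 := by
  by_cases h : l = j
  · subst h
    rw [c.eq_coord_smul v, Linear.comp_smul, hu, smul_zero]
  · rw [c.hom_eq_zero l j h v, comp_zero]

/-- A morphism of objects in degrees `≤ 0` which is injective on morphisms to simple objects
induces a surjection on morphisms from the projectives. -/
lemma exists_lift (c : SimpleCovers k T S P) {Q K : C} (q : Q ⟶ K) (hQ : T.toTStructure.IsLE Q 0)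
    (hK : T.toTStructure.IsLE K 0) (hq : ∀ l, ∀ g : K ⟶ S l, q ≫ g = 0 → g = 0)
    {i : Fin n} (x : P i ⟶ K) : ∃ y : P i ⟶ Q, x = y ≫ q := by
  obtain ⟨Z, a, b, hT⟩ := distinguished_cocone_triangle q
  have hZ : T.toTStructure.IsLE Z (-1) := by
    refine isLE_neg_one_of_hom_simple_eq_zero c.finite Z
      (isLE_obj₃ _ hT 0 (T.toTStructure.isLE_of_le Q 0 _) hK) fun S' hS' f ↦ ?_
    obtain ⟨l, ⟨e⟩⟩ := c.exists_iso S' hS'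
    rw [← cancel_mono e.hom, zero_comp]
    refine eq_zero_of_comp₂_eq_zero hT _ (hq l _ ?_) fun y ↦ ?_
    · rw [← assoc, distTriang_comp₁₂ hT, zero_comp]
    · exact T.toTStructure.zero_of_isLE_of_isGE y (-1) 0 (by lia)
        (T.toTStructure.isLE_shift Q 0 1 (-1)) (c.isGE_simple l)
  exact exists_lift₂ hT x ((c.proj i).hom_eq_zero Z hZ _)

lemma exists_section {i : Fin n} (f : P i ⟶ P i) (hf : f ≫ c.p i ≠ 0) :
    ∃ s : P i ⟶ P i, s ≫ f = 𝟙 (P i) := by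
  obtain ⟨s, hs⟩ := c.exists_lift f (c.proj i).isLE (c.proj i).isLE (fun l g hg ↦ by
    by_cases h : i = l
    · subst h
      rw [c.eq_coord_smul g, Linear.comp_smul] at hg
      rw [c.eq_coord_smul g, (smul_eq_zero.1 hg).resolve_right hf, zero_smul]
    · exact c.hom_eq_zero i l h g) (𝟙 (P i))
  exact ⟨s, hs.symm⟩

lemma isIso_of_comp_ne_zero {i : Fin n} (f : P i ⟶ P i) (hf : f ≫ c.p i ≠ 0) : IsIso f := by
  obtain ⟨s, hs⟩ := c.exists_section f hf
  obtain ⟨r, hr⟩ := c.exists_section s (fun h ↦ c.p_ne_zero i (by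
    rw [← id_comp (c.p i), ← hs, assoc, c.eq_coord_smul (f ≫ c.p i), Linear.comp_smul, h,
      smul_zero]))
  have hrf : r = f := by rw [← comp_id r, ← hs, ← assoc, hr, id_comp]
  exact ⟨s, by rw [← hrf, hr], hs⟩

lemma mem_radSet_iff {i j : Fin n} (f : P i ⟶ P j) :
    f ∈ radSet C (P i) (P j) ↔ f ≫ c.p j = 0 := by
  constructor
  · intro hf
    by_contra h
    obtain rfl : i = j := by
      by_contra hij
      exact h (c.hom_eq_zero i j hij _)
    have := c.isIso_of_comp_ne_zero f h
    have hiso : IsIso (𝟙 (P i) - f ≫ inv f) := hf (inv f)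
    rw [IsIso.hom_inv_id, sub_self, isIsoZero_iff_source_target_isZero] at hiso
    exact c.p_ne_zero i (hiso.1.eq_of_src _ _)
  · intro hf g
    apply c.isIso_of_comp_ne_zero
    rw [Preadditive.sub_comp, id_comp, assoc, c.comp_eq_zero f hf (g ≫ c.p i), sub_zero]
    exact c.p_ne_zero i

lemma mem_radMod_iff {i j : Fin n} (f : P i ⟶ P j) :
    f ∈ radMod C k (P i) (P j) ↔ f ≫ c.p j = 0 := by
  have h : radSet C (P i) (P j) =
      (LinearMap.ker (Linear.rightComp k (P i) (c.p j)) : Set (P i ⟶ P j)) := by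
    ext f
    simp [c.mem_radSet_iff]
  rw [radMod, h, Submodule.span_eq]
  simp

/-- The composition pairing between `Hom(P i, K)` and `Hom(K, S i)`. -/
def pairing (K : C) (i : Fin n) : (P i ⟶ K) →ₗ[k] Module.Dual k (K ⟶ S i) :=
  (Linear.comp (P i) K (S i) : (P i ⟶ K) →ₗ[k] (K ⟶ S i) →ₗ[k] (P i ⟶ S i)).compr₂ (c.coord i).toLinearMap

lemma pairing_apply {K : C} {i : Fin n} (x : P i ⟶ K) (g : K ⟶ S i) :
    c.pairing K i x g = c.coord i (x ≫ g) := rfl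

lemma exists_comp_eq_p {K : C} (hK : T.toTStructure.IsLE K 0) {i : Fin n} (g : K ⟶ S i)
    (hg : g ≠ 0) : ∃ x : P i ⟶ K, c.p i = x ≫ g := by
  obtain ⟨K', a, b, hT⟩ := distinguished_cocone_triangle₁ g
  have := (c.simple i).isLE_fibre hT hK hg
  exact exists_lift₃ hT (c.p i)
    ((c.proj i).hom_eq_zero _ (T.toTStructure.isLE_shift K' 0 1 (-1)) _)

lemma pairing_surjective [∀ X Y : C, FiniteDimensional k (X ⟶ Y)] {K : C}
    (hK : T.toTStructure.IsLE K 0) (i : Fin n) : Function.Surjective (c.pairing K i) := by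
  rw [← LinearMap.flip_injective_iff₁, injective_iff_map_eq_zero]
  intro g hg
  by_contra h
  obtain ⟨x, hx⟩ := c.exists_comp_eq_p hK g h
  have := LinearMap.congr_fun hg x
  rw [LinearMap.flip_apply, pairing_apply, ← hx, c.coord_p] at this
  exact one_ne_zero this

/-- A morphism `P i ⟶ K` in the kernel of the pairing is a sum of composites of a radical
morphism `P i ⟶ P l` and a morphism `P l ⟶ K`. -/
lemma mem_span_of_pairing_eq_zero [∀ X Y : C, FiniteDimensional k (X ⟶ Y)]
    [HasFiniteBiproducts C] {K : C} (hK : T.toTStructure.IsLE K 0) {i : Fin n} (x : P i ⟶ K)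
    (hx : c.pairing K i x = 0) :
    x ∈ Submodule.span k {y : P i ⟶ K | ∃ (l : Fin n) (u : P i ⟶ P l) (v : P l ⟶ K),
      u ≫ c.p l = 0 ∧ y = u ≫ v} := by
  let b := fun l ↦ Module.finBasis k (K ⟶ S l)
  choose y hy using fun (l : Fin n) (a : Fin (Module.finrank k (K ⟶ S l))) ↦
    c.pairing_surjective hK l ((b l).coord a)
  let Q : (Σ l : Fin n, Fin (Module.finrank k (K ⟶ S l))) → C := fun s ↦ P s.1
  let q : (⨁ Q) ⟶ K := biproduct.desc fun s ↦ y s.1 s.2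
  have hQ : T.toTStructure.IsLE (⨁ Q) 0 := by
    rw [T.toTStructure.isLE_iff_orthogonal 0 1 rfl]
    intro Y f hY
    refine biproduct.hom_ext' _ _ fun s ↦ ?_
    rw [comp_zero]
    exact T.toTStructure.zero_of_isLE_of_isGE _ 0 1 (by lia) (c.proj s.1).isLE hY
  obtain ⟨u, hu⟩ := c.exists_lift q hQ hK (fun l g hg ↦ by
    rw [← (b l).forall_coord_eq_zero_iff]
    intro a
    have h : y l a ≫ g = 0 := by
      have := biproduct.ι Q ⟨l, a⟩ ≫= hg
      rwa [biproduct.ι_desc_assoc, comp_zero] at this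
    rw [← hy l a, pairing_apply, h, map_zero]) x
  have hsum : x = ∑ s, (u ≫ biproduct.π Q s) ≫ y s.1 s.2 := by
    simp [hu, q, biproduct.desc_eq, Preadditive.comp_sum]
  have hrad : ∀ s, (u ≫ biproduct.π Q s) ≫ c.p s.1 = 0 := by
    rintro ⟨l, a⟩
    by_cases h : i = l
    · subst h
      have hxa : x ≫ b i a = 0 := (c.coord i).injective (by
        rw [← pairing_apply, hx, map_zero, LinearMap.zero_apply])
      rw [hsum, Preadditive.sum_comp, Finset.sum_eq_single ⟨i, a⟩] at hxa
      · have hya : y i a ≫ b i a = c.p i := (c.coord i).injective (by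
          rw [← pairing_apply, hy, c.coord_p, Module.Basis.coord_apply, Module.Basis.repr_self,
            Finsupp.single_eq_same])
        rwa [assoc, hya] at hxa
      · rintro ⟨l, a'⟩ - hne
        rw [assoc]
        by_cases h : l = i
        · subst h
          have hya : y l a' ≫ b l a = 0 := (c.coord l).injective (by
            rw [← pairing_apply, hy, map_zero, Module.Basis.coord_apply, Module.Basis.repr_self,
              Finsupp.single_eq_of_ne (by rintro rfl; exact hne rfl)])
          rw [hya, comp_zero]
        · rw [c.hom_eq_zero l i h (y l a' ≫ b i a), comp_zero]
      · exact fun h ↦ absurd (Finset.mem_univ _) h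
    · exact c.hom_eq_zero i l h _
  rw [hsum]
  exact Submodule.sum_mem _ fun s _ ↦ Submodule.subset_span ⟨s.1, _, _, hrad s, rfl⟩

section Kernel

variable {K : C} {j : Fin n} {ι : K ⟶ P j} {δ : S j ⟶ K⟦(1 : ℤ)⟧}
  (hT : Triangle.mk ι (c.p j) δ ∈ distTriang C)

lemma isLE_kernel
    (hT : Triangle.mk ι (c.p j) δ ∈ distTriang C) : T.toTStructure.IsLE K 0 :=
  (c.simple j).isLE_fibre hT (c.proj j).isLE (c.p_ne_zero j)

lemma comp_ι_injective
    (hT : Triangle.mk ι (c.p j) δ ∈ distTriang C)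
    {i : Fin n} (x : P i ⟶ K) (hx : x ≫ ι = 0) : x = 0 := by
  obtain ⟨y, rfl⟩ : ∃ y : P i ⟶ (S j)⟦(-1 : ℤ)⟧,
      x = y ≫ (Triangle.mk ι (c.p j) δ).invRotate.mor₁ :=
    Triangle.coyoneda_exact₂ _ (inv_rot_of_distTriang _ hT) x hx
  rw [c.proj i (-1) (by lia) _ (c.simple j).1 y]
  exact zero_comp

/-- `K` maps onto the radical: the map `Hom(P i, K) → Irr(P i, P j)`. -/
def toIrr (i : Fin n) : (P i ⟶ K) →ₗ[k] IrrSpace C k n P i j :=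
  (Submodule.mkQ _).comp ((Linear.rightComp k (P i) ι).codRestrict (radMod C k (P i) (P j))
    fun x ↦ (c.mem_radMod_iff _).2 (by simp [distTriang_comp₁₂ hT]))

lemma toIrr_surjective (i : Fin n) : Function.Surjective (c.toIrr hT i) := by
  refine (Submodule.mkQ_surjective _).comp ?_
  rintro ⟨f, hf⟩
  obtain ⟨x, rfl⟩ := exists_lift₂ hT f ((c.mem_radMod_iff f).1 hf)
  exact ⟨x, rfl⟩

lemma toIrr_eq_zero_iff {i : Fin n} (x : P i ⟶ K) :
    c.toIrr hT i x = 0 ↔ x ≫ ι ∈ radSqMod C k n P i j := by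
  simp [toIrr]

lemma ker_toIrr [∀ X Y : C, FiniteDimensional k (X ⟶ Y)] [HasFiniteBiproducts C] (i : Fin n) :
    LinearMap.ker (c.toIrr hT i) = LinearMap.ker (c.pairing K i) := by
  ext x
  rw [LinearMap.mem_ker, LinearMap.mem_ker, c.toIrr_eq_zero_iff hT]
  constructor
  · intro hx
    have hle : radSqMod C k n P i j ≤
        (LinearMap.ker (c.pairing K i)).map (Linear.rightComp k (P i) ι) := by
      rw [radSqMod, Submodule.span_le]
      rintro _ ⟨l, u, v, hu, hv, rfl⟩
      obtain ⟨v', rfl⟩ := exists_lift₂ hT v ((c.mem_radSet_iff v).1 hv)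
      refine ⟨u ≫ v', ?_, by simp⟩
      refine LinearMap.ext fun g ↦ ?_
      rw [pairing_apply, assoc, c.comp_eq_zero u ((c.mem_radSet_iff u).1 hu), map_zero,
        LinearMap.zero_apply]
    obtain ⟨y, hy, hyx⟩ := hle hx
    rw [Linear.rightComp_apply] at hyx
    have : x - y = 0 := c.comp_ι_injective hT _ (by rw [Preadditive.sub_comp, hyx, sub_self])
    rwa [sub_eq_zero.1 this]
  · intro hx
    have := c.mem_span_of_pairing_eq_zero (c.isLE_kernel hT) x hx
    refine (Submodule.span_le (p := (radSqMod C k n P i j).comap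
      (Linear.rightComp k (P i) ι))).2 ?_ this
    rintro _ ⟨l, u, v, hu, rfl⟩
    exact Submodule.subset_span ⟨l, u, v ≫ ι, (c.mem_radSet_iff u).2 hu,
      (c.mem_radSet_iff _).2 (by rw [assoc, distTriang_comp₁₂ hT, comp_zero]), by simp⟩

/-- `Irr(P i, P j)` is dual to `Hom(K, S i)`. -/
noncomputable def irrEquiv [∀ X Y : C, FiniteDimensional k (X ⟶ Y)] [HasFiniteBiproducts C]
    (i : Fin n) : IrrSpace C k n P i j ≃ₗ[k] Module.Dual k (K ⟶ S i) :=
  ((c.toIrr hT i).quotKerEquivOfSurjective (c.toIrr_surjective hT i)).symm ≪≫ₗ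
    Submodule.quotEquivOfEq _ _ (c.ker_toIrr hT i) ≪≫ₗ
    (c.pairing K i).quotKerEquivOfSurjective (c.pairing_surjective (c.isLE_kernel hT) i)

/-- The connecting map `Hom(K, S i) → Hom(S j, (S i)[1])` is bijective. -/
lemma connecting_bijective
    (hT : Triangle.mk ι (c.p j) δ ∈ distTriang C) (i : Fin n) :
    Function.Bijective fun g : K ⟶ S i ↦ δ ≫ g⟦(1 : ℤ)⟧' := by
  constructor
  · intro g g' hgg
    have hsub : δ ≫ (g - g')⟦(1 : ℤ)⟧' = 0 := by
      rw [Functor.map_sub, Preadditive.comp_sub, sub_eq_zero]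
      exact hgg
    obtain ⟨y, hy⟩ : ∃ y : (P j)⟦(1 : ℤ)⟧ ⟶ (S i)⟦(1 : ℤ)⟧,
        (g - g')⟦(1 : ℤ)⟧' = (-ι⟦(1 : ℤ)⟧') ≫ y :=
      exists_desc₃ (rot_of_distTriang _ hT) _ hsub
    obtain ⟨z, rfl⟩ := (shiftFunctor C (1 : ℤ)).map_surjective y
    have hz : g - g' = -(ι ≫ z) := (shiftFunctor C (1 : ℤ)).map_injective (by
      rw [hy, Functor.map_neg, Functor.map_comp, Preadditive.neg_comp])
    rw [c.comp_eq_zero ι (distTriang_comp₁₂ hT) z, neg_zero] at hz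
    exact sub_eq_zero.1 hz
  · intro e
    obtain ⟨y, rfl⟩ := exists_desc₃ hT e (c.proj j 1 one_ne_zero _ (c.simple i).1 _)
    obtain ⟨g, rfl⟩ := (shiftFunctor C (1 : ℤ)).map_surjective y
    exact ⟨g, rfl⟩

end Kernel

lemma eq_smul_id (c : SimpleCovers k T S P) {i : Fin n} (e : S i ⟶ S i) : ∃ a : k, e = a • 𝟙 (S i) := by
  obtain ⟨K, ι, δ, hT⟩ := distinguished_cocone_triangle₁ (c.p i)
  refine ⟨c.coord i (c.p i ≫ e), sub_eq_zero.1 ?_⟩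
  refine eq_zero_of_comp₂_eq_zero hT _ ?_ fun y ↦ ?_
  · rw [Preadditive.comp_sub, Linear.comp_smul, comp_id, ← c.eq_coord_smul, sub_self]
  · have := c.isLE_kernel hT
    exact T.toTStructure.zero_of_isLE_of_isGE y (-1) 0 (by lia)
      (T.toTStructure.isLE_shift K 0 1 (-1)) (c.isGE_simple i)

lemma isIso_shift_endomorphism_iff (c : SimpleCovers k T S P) {i : Fin n}
    (e : (S i)⟦(1 : ℤ)⟧ ⟶ (S i)⟦(1 : ℤ)⟧) :
    IsIso e ↔ e ≠ 0 := by
  obtain ⟨f, rfl⟩ := (shiftFunctor C (1 : ℤ)).map_surjective e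
  obtain ⟨a, rfl⟩ := c.eq_smul_id f
  have hid : ¬ IsZero ((S i)⟦(1 : ℤ)⟧) := fun h ↦ (c.simple i).2.1 (by
    rw [IsZero.iff_id_eq_zero] at h ⊢
    apply (shiftFunctor C (1 : ℤ)).map_injective
    simpa using h)
  constructor
  · intro h h0
    rw [h0, isIsoZero_iff_source_target_isZero] at h
    exact hid h.1
  · intro h
    have ha : a ≠ 0 := by
      rintro rfl
      simp at h
    have : IsIso (a • 𝟙 (S i)) := ⟨a⁻¹ • 𝟙 (S i), by simp [smul_smul, ha], by simp [smul_smul, ha]⟩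
    infer_instance

/-- The shift is semilinear, with respect to some bijection of `k`, on scalar endomorphisms of a
simple object. -/
lemma exists_shift_scalar [IsAlgClosed k] [∀ X Y : C, FiniteDimensional k (X ⟶ Y)]
    (c : SimpleCovers k T S P) (i : Fin n) :
    ∃ σ : k → k, Function.Bijective σ ∧
      ∀ a, (a • 𝟙 (S i))⟦(1 : ℤ)⟧' = σ a • 𝟙 ((S i)⟦(1 : ℤ)⟧) := by
  have h1 := finrank_endomorphism_eq_one k (c.isIso_shift_endomorphism_iff (i := i))
  have hid' : 𝟙 ((S i)⟦(1 : ℤ)⟧) ≠ 0 := (c.isIso_shift_endomorphism_iff _).1 inferInstance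
  have hid : 𝟙 (S i) ≠ 0 := fun h ↦ (c.simple i).2.1 ((IsZero.iff_id_eq_zero _).2 h)
  choose σ hσ using fun a : k ↦
    (finrank_eq_one_iff_of_nonzero' _ hid').1 h1 ((a • 𝟙 (S i))⟦(1 : ℤ)⟧')
  refine ⟨σ, ⟨fun a a' haa ↦ ?_, fun d ↦ ?_⟩, fun a ↦ (hσ a).symm⟩
  · have : a • 𝟙 (S i) = a' • 𝟙 (S i) :=
      (shiftFunctor C (1 : ℤ)).map_injective (by rw [← hσ, ← hσ, haa])
    exact smul_left_injective k hid this
  · obtain ⟨f, hf⟩ := (shiftFunctor C (1 : ℤ)).map_surjective (d • 𝟙 ((S i)⟦(1 : ℤ)⟧))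
    obtain ⟨a, rfl⟩ := c.eq_smul_id f
    exact ⟨a, smul_left_injective k hid' ((hσ a).trans hf)⟩

/-- The connecting map need not be linear since the shift is not assumed to be, but it preserves
dimensions. -/
lemma finrank_hom_kernel [IsAlgClosed k] [∀ X Y : C, FiniteDimensional k (X ⟶ Y)] {K : C}
    {j : Fin n} {ι : K ⟶ P j} {δ : S j ⟶ K⟦(1 : ℤ)⟧}
    (hT : Triangle.mk ι (c.p j) δ ∈ distTriang C) (i : Fin n) :
    Module.finrank k (K ⟶ S i) = Module.finrank k (S j ⟶ (S i)⟦(1 : ℤ)⟧) := by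
  obtain ⟨σ, hσ, hσ'⟩ := c.exists_shift_scalar i
  let φ : (K ⟶ S i) →+ (S j ⟶ (S i)⟦(1 : ℤ)⟧) :=
    AddMonoidHom.mk' (fun g ↦ δ ≫ g⟦(1 : ℤ)⟧') (by simp)
  refine congrArg Cardinal.toNat (rank_eq_of_equiv_equiv σ
    (AddEquiv.ofBijective φ (c.connecting_bijective hT i)) hσ fun a g ↦ ?_)
  change δ ≫ (a • g)⟦(1 : ℤ)⟧' = σ a • (δ ≫ g⟦(1 : ℤ)⟧')
  have : a • g = g ≫ (a • 𝟙 (S i)) := by simp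
  rw [this, Functor.map_comp, hσ']
  simp

end SimpleCovers

end Covers

/-- Let `H` be a finite heart with simples `S 0, …, S (n-1)` and
projectives `P 0, …, P (n-1)` with `dim Hom(P i, S j) = δ_{ij}`.  With
`A = End(P 0 ⊕ … ⊕ P (n-1))`, `J` the Jacobson radical of `A` and `e_i` the idempotent
projecting onto `P i`, there is for all `i, j` a `k`-linear isomorphism
`e_j (J/J²) e_i ≅ Ext¹(S j, S i)^*`; that is, the space `Irr(P i, P j)` of irreducible
maps is dual to `Ext¹(S j, S i) = Hom(S j, (S i)[1])`. -/
theorem statement_15 (k : Type*) [Field k] [IsAlgClosed k] [Linear k C]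
    [∀ X Y : C, FiniteDimensional k (X ⟶ Y)] [HasFiniteBiproducts C]
    (T : TStr C) (hfin : FiniteHeart C T) (n : ℕ) (S P : Fin n → C)
    (hS : ∀ i, IsSimpleIn C (heart C T) (S i))
    (hSall : ∀ Z, IsSimpleIn C (heart C T) Z → ∃ i, Nonempty (Z ≅ S i))
    (hP : ∀ i, IsProjOf C T (P i))
    (hdual : ∀ i j, Module.finrank k (P i ⟶ S j) = if i = j then 1 else 0)
    (i j : Fin n) :
    Nonempty ((IrrSpace C k n P i j) ≃ₗ[k]
      Module.Dual k (S j ⟶ (S i)⟦(1 : ℤ)⟧)) := by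
  let e : ∀ l, (P l ⟶ S l) ≃ₗ[k] k := fun l ↦
    LinearEquiv.ofFinrankEq _ _ (by simp [hdual])
  let c : SimpleCovers k T S P :=
    { finite := hfin
      simple := hS
      exists_iso := hSall
      proj := hP
      p := fun l ↦ (e l).symm 1
      coord := e
      coord_p := fun l ↦ by simp
      hom_eq_zero := fun l m hlm f ↦ by
        have : Subsingleton (P l ⟶ S m) :=
          (Module.finrank_eq_zero_iff_of_free k _).1 (by simp [hdual, hlm])
        exact Subsingleton.elim _ _ }
  obtain ⟨K, ι, δ, hT⟩ := distinguished_cocone_triangle₁ (c.p j)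
  refine ⟨c.irrEquiv hT i ≪≫ₗ LinearEquiv.ofFinrankEq _ _ ?_⟩
  rw [Subspace.dual_finrank_eq, Subspace.dual_finrank_eq, c.finrank_hom_kernel hT]

end Paper
end

section
/- Let D be a triangulated category, H and H0 hearts of bounded t-structures on D with H[1] ≤ H0 ≤ H[2], and S a rigid simple object of H for which the simple forward tilt H^♯_S is defined. Then the following are equivalent: (i) S[1] ∉ H0; (ii) H^♯_S[1] ≤ H0; (iii) S[2] ∈ H0. -/
open CategoryTheory Category Limits Pretriangulated ZeroObject

universe v u

namespace Paper

variable (C : Type u) [Category.{v} C] [HasZeroObject C] [HasShift C ℤ]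
  [Preadditive C] [∀ n : ℤ, (shiftFunctor C n).Additive] [Pretriangulated C]

variable {C}

variable (C)

section Helpers

set_option linter.unusedSectionVars false

variable {C}

namespace TStr

lemma mem_of_iso_s17 (T : TStr C) {X Y : C} (e : X ≅ Y) (hX : X ∈ T.P) : Y ∈ T.P :=
  T.summand X Y e.inv e.hom e.inv_hom_id hX

lemma perp_of_iso {P : Set C} {X Y : C} (e : X ≅ Y) (hX : X ∈ perp C P) : Y ∈ perp C P := by
  intro F hF f
  rw [← cancel_mono e.inv, zero_comp]
  exact hX F hF _

lemma shift_neg_one_mem_perp (T : TStr C) {X : C} (hX : X ∈ perp C T.P) :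
    X⟦(-1 : ℤ)⟧ ∈ perp C T.P := by
  intro F hF f
  apply (shiftFunctor C (1 : ℤ)).map_injective
  rw [Functor.map_zero]
  exact perp_of_iso ((shiftEquiv C (1 : ℤ)).counitIso.symm.app X) hX _ (T.shift_mem F hF) _

/-- The Mathlib t-structure (cohomological convention) with aisle `P`. -/
def toTStructure_s17 (T : TStr C) : Triangulated.TStructure C where
  le n X := X⟦n⟧ ∈ T.P
  ge n X := X⟦n - 1⟧ ∈ perp C T.P
  le_isClosedUnderIsomorphisms n := ⟨fun e hX => T.mem_of_iso_s17 ((shiftFunctor C n).mapIso e) hX⟩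
  ge_isClosedUnderIsomorphisms n :=
    ⟨fun e hX => perp_of_iso ((shiftFunctor C (n - 1)).mapIso e) hX⟩
  le_shift n a n' h X hX := T.mem_of_iso_s17 ((shiftFunctorAdd' C a n' n h).app X) hX
  ge_shift n a n' h X hX :=
    perp_of_iso ((shiftFunctorAdd' C a (n' - 1) (n - 1) (by lia)).app X) hX
  zero' X Y f hX hY :=
    perp_of_iso ((shiftFunctorZero' C (1 - 1 : ℤ) (by lia)).app Y) hY X
      (T.mem_of_iso_s17 ((shiftFunctorZero C ℤ).app X) hX) f
  le_zero_le X hX :=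
    T.mem_of_iso_s17 ((shiftFunctorAdd' C (0 : ℤ) 1 1 (by lia)).symm.app X) (T.shift_mem _ hX)
  ge_one_le X hX :=
    perp_of_iso ((shiftFunctorAdd' C (1 - 1 : ℤ) (-1) (0 - 1) (by lia)).symm.app X)
      (T.shift_neg_one_mem_perp hX)
  exists_triangle_zero_one A := by
    obtain ⟨F, G, f, g, h, hF, hG, mem⟩ := T.exists_triangle A
    exact ⟨F, G, T.mem_of_iso_s17 ((shiftFunctorZero C ℤ).symm.app F) hF,
      perp_of_iso ((shiftFunctorZero' C (1 - 1 : ℤ) (by lia)).symm.app G) hG, f, g, h, mem⟩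

lemma isLE_iff (T : TStr C) (X : C) (n : ℤ) : T.toTStructure_s17.IsLE X n ↔ X⟦n⟧ ∈ T.P :=
  (T.toTStructure_s17.le_iff_isLE X n).symm

lemma isGE_iff (T : TStr C) (X : C) (n : ℤ) :
    T.toTStructure_s17.IsGE X n ↔ X⟦n - 1⟧ ∈ perp C T.P :=
  (T.toTStructure_s17.ge_iff_isGE X n).symm

lemma mem_iff (T : TStr C) (X : C) : X ∈ T.P ↔ T.toTStructure_s17.IsLE X 0 := by
  rw [isLE_iff]
  exact ⟨T.mem_of_iso_s17 ((shiftFunctorZero C ℤ).symm.app X),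
    T.mem_of_iso_s17 ((shiftFunctorZero C ℤ).app X)⟩

lemma mem_shiftSet_iff (T : TStr C) (X : C) (m : ℤ) :
    X ∈ shiftSet C T.P m ↔ T.toTStructure_s17.IsLE X (-m) :=
  (T.isLE_iff X (-m)).symm

lemma mem_heart_iff (T : TStr C) (X : C) :
    X ∈ heart C T ↔ T.toTStructure_s17.IsLE X 0 ∧ T.toTStructure_s17.IsGE X 0 := by
  rw [← mem_iff, isGE_iff]
  rfl

lemma exists_isLE_s17 (T : TStr C) (X : C) : ∃ n, T.toTStructure_s17.IsLE X n := by
  obtain ⟨a, ha⟩ := T.bounded_above X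
  exact ⟨a, (T.isLE_iff X a).2 (ha a le_rfl)⟩

lemma exists_isGE_s17 (T : TStr C) (X : C) : ∃ n, T.toTStructure_s17.IsGE X n := by
  obtain ⟨b, hb⟩ := T.bounded_below X
  exact ⟨b + 1, (T.isGE_iff X (b + 1)).2 (hb _ (by lia))⟩

end TStr

lemma isLE_obj₃_s17 (t : Triangulated.TStructure C) {A B D : C} {f : A ⟶ B} {g : B ⟶ D}
    {h : D ⟶ A⟦(1 : ℤ)⟧} (mem : Triangle.mk f g h ∈ distTriang C) (n : ℤ)
    (hA : t.IsLE A (n + 1)) (hB : t.IsLE B n) : t.IsLE D n :=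
  t.isLE₂ _ (rot_of_distTriang _ mem) n hB (t.isLE_shift A (n + 1) 1 n)

lemma isGE_obj₁_s17 (t : Triangulated.TStructure C) {A B D : C} {f : A ⟶ B} {g : B ⟶ D}
    {h : D ⟶ A⟦(1 : ℤ)⟧} (mem : Triangle.mk f g h ∈ distTriang C) (n : ℤ)
    (hB : t.IsGE B n) (hD : t.IsGE D (n - 1)) : t.IsGE A n :=
  t.isGE₂ _ (inv_rot_of_distTriang _ mem) n (t.isGE_shift D (n - 1) (-1) n) hB

lemma isZero_of_isZero_shift {X : C} (n : ℤ) (hX : IsZero (X⟦n⟧)) : IsZero X :=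
  ((shiftFunctor C (-n)).map_isZero hX).of_iso ((shiftEquiv C n).unitIso.app X)

/-- Replace the outer terms of a distinguished triangle by isomorphic objects. -/
lemma distinguished_of_iso₁₃ {A A' B D D' : C} {f : A ⟶ B} {g : B ⟶ D} {h : D ⟶ A⟦(1 : ℤ)⟧}
    (mem : Triangle.mk f g h ∈ distTriang C) (a : A' ≅ A) (d : D' ≅ D) :
    Triangle.mk (a.hom ≫ f) (g ≫ d.inv) (d.hom ≫ h ≫ a.inv⟦(1 : ℤ)⟧') ∈ distTriang C := by
  refine isomorphic_distinguished _ mem _ (Triangle.isoMk _ _ a (Iso.refl _) d ?_ ?_ ?_)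
  · exact comp_id _
  · change (g ≫ d.inv) ≫ d.hom = 𝟙 B ≫ g
    simp
  · change (d.hom ≫ h ≫ a.inv⟦(1 : ℤ)⟧') ≫ a.hom⟦(1 : ℤ)⟧' = d.hom ≫ h
    rw [Category.assoc, Category.assoc, ← Functor.map_comp, Iso.inv_hom_id,
      CategoryTheory.Functor.map_id, comp_id]

/-- The object `B` is an extension of `D` by `A`. -/
def IsExtension (A B D : C) : Prop :=
  ∃ (f : A ⟶ B) (g : B ⟶ D) (h : D ⟶ A⟦(1 : ℤ)⟧), Triangle.mk f g h ∈ distTriang C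

lemma isZero_obj₃_of_mor₂_eq_zero (Y : Triangle C) (hY : Y ∈ distTriang C) (h : Y.mor₂ = 0)
    (hk : ∀ k : Y.obj₁⟦(1 : ℤ)⟧ ⟶ Y.obj₃, k = 0) : IsZero Y.obj₃ := by
  obtain ⟨k, hk'⟩ := Y.yoneda_exact₃ hY (𝟙 _) (by rw [h, zero_comp])
  rw [IsZero.iff_id_eq_zero, hk', hk k, comp_zero]

lemma isZero_obj₁_of_mor₁_eq_zero (Y : Triangle C) (hY : Y ∈ distTriang C) (h : Y.mor₁ = 0)
    (hk : ∀ k : Y.obj₁⟦(1 : ℤ)⟧ ⟶ Y.obj₃, k = 0) : IsZero Y.obj₁ := by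
  obtain ⟨k, hk'⟩ := Y.coyoneda_exact₁ hY (𝟙 _) (by rw [h, Functor.map_zero, comp_zero])
  apply isZero_of_isZero_shift (1 : ℤ)
  rw [IsZero.iff_id_eq_zero, hk', hk k, zero_comp]

namespace HeartFiltration

/-- The filtration of length zero of a zero object. -/
def ofIsZero (T : TStr C) {X : C} (hX : IsZero X) : HeartFiltration C T X where
  n := 0
  obj _ := X
  deg _ := 0
  factor _ := X
  zero := hX
  top := Iso.refl X
  mem := by lia
  strict := by lia
  tri := by lia

/-- Add one more factor, of degree `d` smaller than all the others, to a filtration. -/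
def extend {T : TStr C} {A X D G : C} (F : HeartFiltration C T A) (d : ℤ)
    (hd : ∀ i, 1 ≤ i → i ≤ F.n → d < F.deg i) (hD : D ∈ heart C T)
    (e : D⟦d⟧ ≅ G) (f : A ⟶ X) (g : X ⟶ G) (h : G ⟶ A⟦(1 : ℤ)⟧)
    (hT : Triangle.mk f g h ∈ distTriang C) : HeartFiltration C T X where
  n := F.n + 1
  obj i := if i ≤ F.n then F.obj i else X
  deg i := if i ≤ F.n then F.deg i else d
  factor i := if i ≤ F.n then F.factor i else D
  zero := by simpa using F.zero
  top := eqToIso (by simp)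
  mem i hi hi' := by
    split_ifs with hn
    · exact F.mem i hi hn
    · exact hD
  strict i j hi hij hj := by
    rw [if_pos (by lia : i ≤ F.n)]
    split_ifs with hn
    · exact F.strict i j hi hij hn
    · exact hd i hi (by lia)
  tri i hi hi' := by
    change IsExtension (if i - 1 ≤ F.n then F.obj (i - 1) else X)
      (if i ≤ F.n then F.obj i else X)
      ((if i ≤ F.n then F.factor i else D)⟦if i ≤ F.n then F.deg i else d⟧)
    by_cases hn : i ≤ F.n
    · rw [if_pos hn, if_pos hn, if_pos hn, if_pos (by lia : i - 1 ≤ F.n)]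
      exact F.tri i hi hn
    · obtain rfl : i = F.n + 1 := by lia
      rw [if_neg hn, if_neg hn, if_neg hn, Nat.add_sub_cancel, if_pos le_rfl]
      exact ⟨_, _, _, distinguished_of_iso₁₃ hT F.top e⟩

/-- An object in `P[a] ∩ P[b]^⊥` has a filtration with degrees in `[a, b)`. -/
lemma exists_of_bounds (T : TStr C) (X : C) (a b : ℤ) (hab : a ≤ b)
    (hLE : T.toTStructure_s17.IsLE X (-a)) (hGE : T.toTStructure_s17.IsGE X (1 - b)) :
    ∃ F : HeartFiltration C T X, ∀ i, 1 ≤ i → i ≤ F.n → a ≤ F.deg i ∧ F.deg i < b := by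
  obtain ⟨k, rfl⟩ : ∃ k : ℕ, b = a + k := ⟨(b - a).toNat, by lia⟩
  clear hab
  induction k generalizing a X with
  | zero =>
    refine ⟨ofIsZero T (T.toTStructure_s17.isZero X (-a) (1 - (a + (0 : ℕ)))), ?_⟩
    intro i hi hi'
    exact absurd (show i ≤ 0 from hi') (by lia)
  | succ k ih =>
    obtain ⟨A, G, hA, hG, f, g, h, mem⟩ :=
      T.toTStructure_s17.exists_triangle X (-a - 1) (-a) (by lia)
    rw [Triangulated.TStructure.le_iff_isLE] at hA
    rw [Triangulated.TStructure.ge_iff_isGE] at hG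
    have hG' : T.toTStructure_s17.IsLE G (-a) :=
      isLE_obj₃_s17 _ mem _ (T.toTStructure_s17.isLE_of_le A (-a - 1) _) hLE
    have hA' : T.toTStructure_s17.IsGE A (1 - (a + (k + 1 : ℕ))) :=
      isGE_obj₁_s17 _ mem _ hGE (T.toTStructure_s17.isGE_of_ge G _ (-a))
    obtain ⟨F, hF⟩ := ih A (a + 1) (by rwa [show -(a + 1) = -a - 1 by lia])
      (by rwa [show 1 - (a + 1 + (k : ℤ)) = 1 - (a + (k + 1 : ℕ)) by lia])
    refine ⟨F.extend a (fun i hi hi' => by have := hF i hi hi'; lia) (D := G⟦-a⟧) ?_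
      ((shiftEquiv C a).counitIso.app G) f g h mem, ?_⟩
    · rw [TStr.mem_heart_iff]
      exact ⟨T.toTStructure_s17.isLE_shift G (-a) (-a) 0, T.toTStructure_s17.isGE_shift G (-a) (-a) 0⟩
    · intro i hi hi'
      dsimp [extend] at hi' ⊢
      split_ifs with hn
      · have := hF i hi hn
        lia
      · lia

lemma nonempty (T : TStr C) (X : C) : Nonempty (HeartFiltration C T X) := by
  obtain ⟨p, hp⟩ := T.exists_isLE_s17 X
  obtain ⟨q, hq⟩ := T.exists_isGE_s17 X
  obtain ⟨F, -⟩ := exists_of_bounds T X (-p) (max (-p) (1 - q)) (le_max_left _ _)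
    (by rwa [neg_neg]) (T.toTStructure_s17.isGE_of_ge X _ q)
  exact ⟨F⟩

/-- A property closed under isomorphisms and extensions holds for an object with a filtration
all of whose shifted factors have the property. -/
lemma obj_induction {T : TStr C} {X : C} (F : HeartFiltration C T X) (Q : C → Prop)
    (hzero : ∀ Y, IsZero Y → Q Y)
    (hext : ∀ (Y : Triangle C), Y ∈ distTriang C → Q Y.obj₁ → Q Y.obj₃ → Q Y.obj₂)
    (m : ℕ) (hm : m ≤ F.n) (hQ : ∀ i, 1 ≤ i → i ≤ m → Q ((F.factor i)⟦F.deg i⟧)) :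
    Q (F.obj m) := by
  induction m with
  | zero => exact hzero _ F.zero
  | succ m ih =>
    obtain ⟨f, g, h, mem⟩ := F.tri (m + 1) (by lia) hm
    exact hext _ mem (ih (by lia) fun i hi hi' => hQ i hi (by lia)) (hQ _ (by lia) le_rfl)

lemma induction {T : TStr C} {X : C} (F : HeartFiltration C T X) (Q : C → Prop)
    (hzero : ∀ Y, IsZero Y → Q Y)
    (hext : ∀ (Y : Triangle C), Y ∈ distTriang C → Q Y.obj₁ → Q Y.obj₃ → Q Y.obj₂)
    (hQ : ∀ i, 1 ≤ i → i ≤ F.n → Q ((F.factor i)⟦F.deg i⟧)) : Q X := by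
  have hn := F.obj_induction Q hzero hext F.n le_rfl hQ
  refine hext (Triangle.mk F.top.hom (0 : X ⟶ 0) 0) ?_ hn (hzero _ (isZero_zero C))
  rw [Triangle.distinguished_iff_of_isZero₃ _ (isZero_zero C)]
  exact inferInstanceAs (IsIso F.top.hom)

lemma isLE_factor {T : TStr C} {X : C} (F : HeartFiltration C T X) (i : ℕ) (hi : 1 ≤ i)
    (hi' : i ≤ F.n) : T.toTStructure_s17.IsLE ((F.factor i)⟦F.deg i⟧) (-F.deg i) := by
  have := ((T.mem_heart_iff _).1 (F.mem i hi hi')).1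
  exact T.toTStructure_s17.isLE_shift _ 0 _ _

lemma isGE_factor {T : TStr C} {X : C} (F : HeartFiltration C T X) (i : ℕ) (hi : 1 ≤ i)
    (hi' : i ≤ F.n) : T.toTStructure_s17.IsGE ((F.factor i)⟦F.deg i⟧) (-F.deg i) := by
  have := ((T.mem_heart_iff _).1 (F.mem i hi hi')).2
  exact T.toTStructure_s17.isGE_shift _ 0 _ _

lemma isLE_obj {T : TStr C} {X : C} (F : HeartFiltration C T X) (m : ℕ) (hm : m < F.n) :
    T.toTStructure_s17.IsLE (F.obj m) (-F.deg (m + 1) - 1) := by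
  refine F.obj_induction (fun Y => T.toTStructure_s17.IsLE Y (-F.deg (m + 1) - 1))
    (fun Y hY => T.toTStructure_s17.isLE_of_isZero hY _)
    (fun Y hY h₁ h₃ => T.toTStructure_s17.isLE₂ _ hY _ h₁ h₃) m hm.le fun i hi hi' => ?_
  have := F.isLE_factor i hi (by lia)
  have := F.strict i (m + 1) hi (by lia) hm
  exact T.toTStructure_s17.isLE_of_le _ (-F.deg i) _

/-- A filtration step lying in the heart has at most one nonzero factor, in degree zero. -/
lemma factor_of_obj_mem_heart {T : TStr C} {X : C} (F : HeartFiltration C T X) (m : ℕ)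
    (hm : m ≤ F.n) (hX : F.obj m ∈ heart C T) (i : ℕ) (hi : 1 ≤ i) (hi' : i ≤ m) :
    IsZero (F.factor i) ∨ (F.deg i = 0 ∧ Nonempty (F.factor i ≅ F.obj m)) := by
  induction m generalizing i with
  | zero => lia
  | succ m ih =>
    obtain ⟨f, g, h, mem⟩ : ∃ (f : F.obj m ⟶ F.obj (m + 1))
        (g : F.obj (m + 1) ⟶ (F.factor (m + 1))⟦F.deg (m + 1)⟧)
        (h : (F.factor (m + 1))⟦F.deg (m + 1)⟧ ⟶ (F.obj m)⟦(1 : ℤ)⟧),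
        Triangle.mk f g h ∈ distTriang C := F.tri (m + 1) (by lia) hm
    have hle := F.isLE_obj m (by lia)
    have hLE := F.isLE_factor (m + 1) (by lia) hm
    have hGE := F.isGE_factor (m + 1) (by lia) hm
    have hle' := T.toTStructure_s17.isLE_shift (F.obj m) (-F.deg (m + 1) - 1) 1
      (-F.deg (m + 1) - 2)
    obtain ⟨hX₀, hX₁⟩ := (T.mem_heart_iff _).1 hX
    have hzero (k : (F.obj m)⟦(1 : ℤ)⟧ ⟶ (F.factor (m + 1))⟦F.deg (m + 1)⟧) : k = 0 :=
      T.toTStructure_s17.zero k (-F.deg (m + 1) - 2) (-F.deg (m + 1))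
    rcases lt_or_ge (F.deg (m + 1)) 0 with hd | hd
    · have hg : g = 0 := T.toTStructure_s17.zero g 0 (-F.deg (m + 1))
      have hA : IsZero ((F.factor (m + 1))⟦F.deg (m + 1)⟧) :=
        isZero_obj₃_of_mor₂_eq_zero _ mem hg hzero
      have : IsIso f := (Triangle.isZero₃_iff_isIso₁ _ mem).1 hA
      obtain rfl | hi'' := eq_or_lt_of_le hi'
      · exact Or.inl (isZero_of_isZero_shift _ hA)
      · have hm' : F.obj m ∈ heart C T := (T.mem_heart_iff _).2
          ⟨T.toTStructure_s17.isLE_of_iso (asIso f).symm 0,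
            T.toTStructure_s17.isGE_of_iso (asIso f).symm 0⟩
        obtain h | ⟨h, ⟨e⟩⟩ := ih (by lia) hm' i hi (by lia)
        · exact Or.inl h
        · exact Or.inr ⟨h, ⟨e ≪≫ asIso f⟩⟩
    · have hf : f = 0 := T.toTStructure_s17.zero f (-F.deg (m + 1) - 1) 0
      have hB : IsZero (F.obj m) := isZero_obj₁_of_mor₁_eq_zero _ mem hf hzero
      have : IsIso g := (Triangle.isZero₁_iff_isIso₂ _ mem).1 hB
      obtain rfl | hi'' := eq_or_lt_of_le hi'
      · rcases eq_or_lt_of_le hd with hd' | hd'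
        · exact Or.inr ⟨hd'.symm, ⟨((shiftFunctorZero' C _ hd'.symm).app _).symm ≪≫
            (asIso g).symm⟩⟩
        · have := T.toTStructure_s17.isGE_of_iso (asIso g) 0
          exact Or.inl (isZero_of_isZero_shift (F.deg (m + 1))
            (T.toTStructure_s17.isZero _ (-F.deg (m + 1)) 0))
      · have hm' : F.obj m ∈ heart C T :=
          (T.mem_heart_iff _).2
          ⟨T.toTStructure_s17.isLE_of_isZero hB _, T.toTStructure_s17.isGE_of_isZero hB _⟩
        obtain h | ⟨-, ⟨e⟩⟩ := ih (by lia) hm' i hi (by lia)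
        · exact Or.inl h
        · exact Or.inl (hB.of_iso e)

lemma factor_of_mem_heart {T : TStr C} {X : C} (F : HeartFiltration C T X)
    (hX : X ∈ heart C T) (i : ℕ) (hi : 1 ≤ i) (hi' : i ≤ F.n) :
    IsZero (F.factor i) ∨ (F.deg i = 0 ∧ Nonempty (F.factor i ≅ X)) := by
  rw [TStr.mem_heart_iff] at hX
  obtain ⟨_, _⟩ := hX
  obtain h | ⟨h, ⟨e⟩⟩ := F.factor_of_obj_mem_heart F.n le_rfl
    ((T.mem_heart_iff _).2 ⟨T.toTStructure_s17.isLE_of_iso F.top.symm 0,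
      T.toTStructure_s17.isGE_of_iso F.top.symm 0⟩) i hi hi'
  · exact Or.inl h
  · exact Or.inr ⟨h, ⟨e ≪≫ F.top⟩⟩

end HeartFiltration

section SimpleTilt

variable [HasFiniteBiproducts C] {T Tsharp : TStr C} {S : C}

lemma bounds_of_mem_simpleSharpSet (hS : S ∈ heart C T) {X : C}
    (hX : X ∈ simpleSharpSet C T S) :
    (T.toTStructure_s17.IsLE X 0 ∧ T.toTStructure_s17.IsGE X (-1)) ∧ ∀ f : X ⟶ S, f = 0 := by
  obtain ⟨F⟩ := HeartFiltration.nonempty T X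
  have := ((T.mem_heart_iff S).1 hS).2
  refine F.induction (fun Y => (T.toTStructure_s17.IsLE Y 0 ∧ T.toTStructure_s17.IsGE Y (-1)) ∧
    ∀ f : Y ⟶ S, f = 0) ?_ ?_ ?_
  · intro Y hY
    exact ⟨⟨T.toTStructure_s17.isLE_of_isZero hY _, T.toTStructure_s17.isGE_of_isZero hY _⟩,
        fun _ => hY.eq_of_src _ _⟩
  · rintro Y hY ⟨⟨a₁, b₁⟩, c₁⟩ ⟨⟨a₃, b₃⟩, c₃⟩
    refine ⟨⟨T.toTStructure_s17.isLE₂ Y hY _ a₁ a₃, T.toTStructure_s17.isGE₂ Y hY _ b₁ b₃⟩, fun f => ?_⟩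
    obtain ⟨g, rfl⟩ := Triangle.yoneda_exact₂ Y hY f (c₁ _)
    rw [c₃ g, comp_zero]
  · intro i hi hi'
    have hLE := F.isLE_factor i hi hi'
    have hGE := F.isGE_factor i hi hi'
    obtain h0 | ⟨hd, -⟩ | ⟨hd, -, hf⟩ := hX F i hi hi'
    · have hY := (shiftFunctor C (F.deg i)).map_isZero h0
      exact ⟨⟨T.toTStructure_s17.isLE_of_isZero hY _, T.toTStructure_s17.isGE_of_isZero hY _⟩,
        fun _ => hY.eq_of_src _ _⟩
    · exact ⟨⟨T.toTStructure_s17.isLE_of_le _ (-F.deg i) 0, T.toTStructure_s17.isGE_of_ge _ _ (-F.deg i)⟩,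
        fun f => T.toTStructure_s17.zero f (-F.deg i) 0⟩
    · refine ⟨⟨T.toTStructure_s17.isLE_of_le _ (-F.deg i) 0,
        T.toTStructure_s17.isGE_of_ge _ _ (-F.deg i)⟩, fun f => ?_⟩
      rw [← cancel_epi ((shiftFunctorZero' C _ hd).symm.app (F.factor i)).hom, comp_zero]
      exact hf _

lemma isLE_and_hom_zero_of_isLE_sharp (hS : S ∈ heart C T)
    (h : heart C Tsharp = simpleSharpSet C T S) {X : C} (hX : Tsharp.toTStructure_s17.IsLE X 0) :
    T.toTStructure_s17.IsLE X 0 ∧ ∀ f : X ⟶ S, f = 0 := by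
  obtain ⟨q, hq⟩ := Tsharp.exists_isGE_s17 X
  obtain ⟨F, hF⟩ := HeartFiltration.exists_of_bounds Tsharp X 0 (max 0 (1 - q)) (le_max_left _ _)
    (by rwa [neg_zero]) (Tsharp.toTStructure_s17.isGE_of_ge X _ q)
  have := ((T.mem_heart_iff S).1 hS).2
  refine F.induction (fun Y => T.toTStructure_s17.IsLE Y 0 ∧ ∀ f : Y ⟶ S, f = 0) ?_ ?_ ?_
  · intro Y hY
    exact ⟨T.toTStructure_s17.isLE_of_isZero hY _, fun _ => hY.eq_of_src _ _⟩
  · rintro Y hY ⟨a₁, c₁⟩ ⟨a₃, c₃⟩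
    refine ⟨T.toTStructure_s17.isLE₂ Y hY _ a₁ a₃, fun f => ?_⟩
    obtain ⟨g, rfl⟩ := Triangle.yoneda_exact₂ Y hY f (c₁ _)
    rw [c₃ g, comp_zero]
  · intro i hi hi'
    obtain ⟨⟨hLE, -⟩, hf⟩ := bounds_of_mem_simpleSharpSet hS (h ▸ F.mem i hi hi')
    have hd := (hF i hi hi').1
    have := T.toTStructure_s17.isLE_shift (F.factor i) 0 (F.deg i) (-F.deg i)
    refine ⟨T.toTStructure_s17.isLE_of_le _ (-F.deg i) 0, fun f => ?_⟩
    rcases eq_or_lt_of_le hd with hd' | hd'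
    · rw [← cancel_epi ((shiftFunctorZero' C _ hd'.symm).symm.app (F.factor i)).hom, comp_zero]
      exact hf _
    · exact T.toTStructure_s17.zero f (-F.deg i) 0

lemma isGE_of_isGE_sharp (hS : S ∈ heart C T)
    (h : heart C Tsharp = simpleSharpSet C T S) {X : C} (hX : Tsharp.toTStructure_s17.IsGE X 1) :
    T.toTStructure_s17.IsGE X 0 := by
  obtain ⟨p, hp⟩ := Tsharp.exists_isLE_s17 X
  obtain ⟨F, hF⟩ := HeartFiltration.exists_of_bounds Tsharp X (min 0 (-p)) 0 (min_le_left _ _)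
    (Tsharp.toTStructure_s17.isLE_of_le X p _) (by rwa [sub_zero])
  refine F.induction (fun Y => T.toTStructure_s17.IsGE Y 0) ?_ ?_ ?_
  · exact fun Y hY => T.toTStructure_s17.isGE_of_isZero hY _
  · exact fun Y hY => T.toTStructure_s17.isGE₂ Y hY 0
  · intro i hi hi'
    obtain ⟨⟨-, hGE⟩, -⟩ := bounds_of_mem_simpleSharpSet hS (h ▸ F.mem i hi hi')
    have hd := (hF i hi hi').2
    have := T.toTStructure_s17.isGE_shift (F.factor i) (-1) (F.deg i) (-1 - F.deg i)
    exact T.toTStructure_s17.isGE_of_ge _ _ (-1 - F.deg i)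

lemma isLE_sharp_of_isLE_neg_one (hS : S ∈ heart C T)
    (h : heart C Tsharp = simpleSharpSet C T S) {X : C} (hX : T.toTStructure_s17.IsLE X (-1)) :
    Tsharp.toTStructure_s17.IsLE X 0 := by
  rw [Tsharp.toTStructure_s17.isLE_iff_orthogonal 0 1 rfl]
  intro Y f hY
  have := isGE_of_isGE_sharp hS h hY
  exact T.toTStructure_s17.zero f (-1) 0

lemma mem_simpleSharpSet_of_hom_zero {X : C} (hX : X ∈ heart C T) (hf : ∀ f : X ⟶ S, f = 0) :
    X ∈ simpleSharpSet C T S := by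
  intro F i hi hi'
  obtain h0 | ⟨hd, ⟨e⟩⟩ := F.factor_of_mem_heart hX i hi hi'
  · exact Or.inl h0
  · refine Or.inr (Or.inr ⟨hd, F.mem i hi hi', fun f => ?_⟩)
    rw [← cancel_epi e.inv, hf (e.inv ≫ f), comp_zero]

/-- The aisle of the simple forward tilt: objects of `P` without nonzero maps to `S`. -/
lemma isLE_sharp_iff (hS : S ∈ heart C T) (h : heart C Tsharp = simpleSharpSet C T S) (X : C) :
    Tsharp.toTStructure_s17.IsLE X 0 ↔ T.toTStructure_s17.IsLE X 0 ∧ ∀ f : X ⟶ S, f = 0 := by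
  refine ⟨isLE_and_hom_zero_of_isLE_sharp hS h, fun ⟨hX, hf⟩ => ?_⟩
  obtain ⟨A, G, hA, hG, f, g, k, mem⟩ := T.toTStructure_s17.exists_triangle X (-1) 0 (by lia)
  rw [Triangulated.TStructure.le_iff_isLE] at hA
  rw [Triangulated.TStructure.ge_iff_isGE] at hG
  have hG' : T.toTStructure_s17.IsLE G 0 :=
    isLE_obj₃_s17 _ mem _ (T.toTStructure_s17.isLE_of_le A (-1) _) hX
  have hA' := T.toTStructure_s17.isLE_shift A (-1) 1 (-2)
  have := ((T.mem_heart_iff S).1 hS).2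
  have hGS : G ∈ heart C Tsharp := by
    rw [h]
    refine mem_simpleSharpSet_of_hom_zero ((T.mem_heart_iff G).2 ⟨hG', hG⟩) fun φ => ?_
    obtain ⟨ψ, hψ⟩ := Triangle.yoneda_exact₃ _ mem φ (hf _)
    have hψ₀ : ψ = 0 := T.toTStructure_s17.zero (X := A⟦(1 : ℤ)⟧) ψ (-2) 0
    exact hψ.trans (by rw [hψ₀]; exact comp_zero)
  exact Tsharp.toTStructure_s17.isLE₂ _ mem 0 (isLE_sharp_of_isLE_neg_one hS h hA)
    ((Tsharp.mem_heart_iff G).1 hGS).1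

end SimpleTilt

end Helpers

/-- Let `H`, `H0` be hearts with `H[1] ≤ H0 ≤ H[2]` and `S` a rigid
simple of `H` for which the simple forward tilt `H^♯_S` is defined.  Then the following
are equivalent: (i) `S[1] ∉ H0`; (ii) `H^♯_S[1] ≤ H0`; (iii) `S[2] ∈ H0`. -/
theorem statement_17 [HasFiniteBiproducts C] (T T0 : TStr C)
    (h1 : T0.P ⊆ shiftSet C T.P 1) (h2 : shiftSet C T.P 2 ⊆ T0.P)
    (S : C) (hS : IsSimpleIn C (heart C T) S)
    (hrigid : ∀ f : S ⟶ S⟦(1 : ℤ)⟧, f = 0)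
    (Tsharp : TStr C) (h : heart C Tsharp = simpleSharpSet C T S) :
    List.TFAE [S⟦(1 : ℤ)⟧ ∉ heart C T0,
      T0.P ⊆ shiftSet C Tsharp.P 1,
      S⟦(2 : ℤ)⟧ ∈ heart C T0] := by
  obtain ⟨hSLE, hSGE⟩ := (T.mem_heart_iff S).1 hS.1
  have h1' (X : C) (hX : T0.toTStructure_s17.IsLE X 0) : T.toTStructure_s17.IsLE X (-1) :=
    (T.mem_shiftSet_iff X 1).1 (h1 ((T0.mem_iff X).2 hX))
  have h2' (X : C) (hX : T.toTStructure_s17.IsLE X (-2)) : T0.toTStructure_s17.IsLE X 0 :=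
    (T0.mem_iff X).1 (h2 ((T.mem_shiftSet_iff X 2).2 hX))
  have hGE (X : C) (hX : T0.toTStructure_s17.IsGE X 1) : T.toTStructure_s17.IsGE X (-1) := by
    rw [T.toTStructure_s17.isGE_iff_orthogonal (-2) (-1) (by lia)]
    intro Y f hY
    have := h2' Y hY
    exact T0.toTStructure_s17.zero f 0 1
  have hS1 : S⟦(1 : ℤ)⟧ ∈ heart C T0 ↔ T0.toTStructure_s17.IsLE S 1 := by
    rw [TStr.mem_heart_iff, T0.toTStructure_s17.isLE_shift_iff S 1 1 0,
      T0.toTStructure_s17.isGE_shift_iff S 1 1 0, and_iff_left_iff_imp]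
    intro _
    rw [T0.toTStructure_s17.isGE_iff_orthogonal 0 1 (by lia)]
    intro Y f hY
    have := h1' Y hY
    exact T.toTStructure_s17.zero f (-1) 0
  have hS2 : S⟦(2 : ℤ)⟧ ∈ heart C T0 ↔ T0.toTStructure_s17.IsGE S 2 := by
    rw [TStr.mem_heart_iff, T0.toTStructure_s17.isGE_shift_iff S 2 2 0, and_iff_right_iff_imp]
    exact fun _ => h2' _ (T.toTStructure_s17.isLE_shift S 0 2 (-2))
  tfae_have 3 → 1 := by
    rw [hS1, hS2]
    intro _ _
    exact hS.2.1 (T0.toTStructure_s17.isZero S 1 2)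
  tfae_have 1 → 3 := by
    rw [hS1, hS2]
    intro hn
    obtain ⟨A, G, hA, hG, f, g, k, mem⟩ := T0.toTStructure_s17.exists_triangle S 1 2 (by lia)
    rw [Triangulated.TStructure.le_iff_isLE] at hA
    rw [Triangulated.TStructure.ge_iff_isGE] at hG
    have hA' : T.toTStructure_s17.IsLE A 0 := by
      have := h1' _ (T0.toTStructure_s17.isLE_shift A 1 1 0)
      exact T.toTStructure_s17.isLE_of_shift A 0 1 (-1)
    have hG' : T.toTStructure_s17.IsGE G 0 := by
      have := hGE _ (T0.toTStructure_s17.isGE_shift G 2 1 1)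
      exact T.toTStructure_s17.isGE_of_shift G 0 1 (-1)
    have hA'' : T.toTStructure_s17.IsGE A 0 :=
      isGE_obj₁_s17 _ mem 0 hSGE (T.toTStructure_s17.isGE_of_ge G _ 0)
    have hG'' : T.toTStructure_s17.IsLE G 0 :=
      isLE_obj₃_s17 _ mem 0 (T.toTStructure_s17.isLE_of_le A 0 _) hSLE
    obtain h0 | h0 := hS.2.2 A G f g k ((T.mem_heart_iff A).2 ⟨hA', hA''⟩)
      ((T.mem_heart_iff G).2 ⟨hG'', hG'⟩) mem
    · have : IsIso g := (Triangle.isZero₁_iff_isIso₂ _ mem).1 h0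
      exact T0.toTStructure_s17.isGE_of_iso (asIso g).symm 2
    · have : IsIso f := (Triangle.isZero₃_iff_isIso₁ _ mem).1 h0
      exact absurd (T0.toTStructure_s17.isLE_of_iso (asIso f) 1) hn
  tfae_have 3 ↔ 2 := by
    rw [hS2, T0.toTStructure_s17.isGE_iff_orthogonal 1 2 (by lia)]
    constructor
    · intro hS0 X hX
      rw [TStr.mem_iff] at hX
      rw [TStr.mem_shiftSet_iff, ← Tsharp.toTStructure_s17.isLE_shift_iff X (-1) (-1) 0,
        isLE_sharp_iff hS.1 h]
      have := h1' X hX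
      exact ⟨T.toTStructure_s17.isLE_shift X (-1) (-1) 0,
        fun f => hS0 _ f (T0.toTStructure_s17.isLE_shift X 0 (-1) 1)⟩
    · intro hP Y f hY
      have hY' := hP ((T0.mem_iff _).2 (T0.toTStructure_s17.isLE_shift Y 1 1 0))
      rw [TStr.mem_shiftSet_iff, Tsharp.toTStructure_s17.isLE_shift_iff Y 0 1 (-1),
        isLE_sharp_iff hS.1 h] at hY'
      exact hY'.2 f
  tfae_finish

end Paper
end
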